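/- For every real number z, one has z·Φ(z) + φ(z) > 0, where φ(z) = (1/√(2π)) e^{−z²/2} is the standard normal probability density function and Φ(z) = ∫_{−∞}^{z} φ(t) dt is the standard normal cumulative distribution function. Consequently, for σ > 0 the closed-form Expected Improvement (μ − a)·Φ((μ − a)/σ) + σ·φ((μ − a)/σ) is strictly positive for all μ, a ∈ ℝ. -/

import Mathlib

open MeasureTheory Set

/-- The standard normal probability density function φ. -/
noncomputable def stdNormalPDF (z : ℝ) : ℝ :=
  (1 / Real.sqrt (2 * Real.pi)) * Real.exp (-z ^ 2 / 2)

/-- The standard normal cumulative distribution function Φ. -/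
noncomputable def stdNormalCDF (z : ℝ) : ℝ :=
  ∫ t in Iic z, stdNormalPDF t

/-!
The quantity `z Φ(z) + φ(z)` is the expectation of the positive part of `z - X` for a standard
normal `X`: since `φ'(t) = -t φ(t)` and `φ` vanishes at `-∞`, integrating over `(-∞, z]` gives
`φ(z) = ∫ -t φ(t)`, so that `z Φ(z) + φ(z) = ∫ (z - t) φ(t)`, whose integrand is positive below `z`.
The Expected Improvement is `σ` times this quantity at `z = (μ - a) / σ`.
-/

lemma setIntegral_pos_of_forall_pos {α : Type*} [MeasurableSpace α] {μ : Measure α} {s : Set α}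
    {f : α → ℝ} (hs : MeasurableSet s) (hμs : μ s ≠ 0) (hint : IntegrableOn f s μ)
    (hpos : ∀ x ∈ s, 0 < f x) : 0 < ∫ x in s, f x ∂μ := by
  have hsupp : s ⊆ Function.support f := fun x hx => (hpos x hx).ne'
  rw [setIntegral_pos_iff_support_of_nonneg_ae (ae_restrict_of_forall_mem hs fun x hx =>
    (hpos x hx).le) hint, inter_eq_right.mpr hsupp]
  exact pos_iff_ne_zero.mpr hμs

lemma integral_Iic_of_hasDerivAt_of_integrableOn {E : Type*} [NormedAddCommGroup E]
    [NormedSpace ℝ E] [CompleteSpace E] {f f' : ℝ → E} {a : ℝ}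
    (hderiv : ∀ x ∈ Iic a, HasDerivAt f (f' x) x) (hf' : IntegrableOn f' (Iic a))
    (hf : IntegrableOn f (Iic a)) : ∫ x in Iic a, f' x = f a := by
  rw [integral_Iic_of_hasDerivAt_of_tendsto' hderiv hf'
    (tendsto_zero_of_hasDerivAt_of_integrableOn_Iic hderiv hf' hf), sub_zero]

section Gaussian

open ProbabilityTheory
open scoped NNReal

lemma hasDerivAt_gaussianPDFReal (m : ℝ) (v : ℝ≥0) (x : ℝ) :
    HasDerivAt (gaussianPDFReal m v) (-((x - m) / v) * gaussianPDFReal m v x) x := by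
  have hexponent : HasDerivAt (fun t : ℝ => -(t - m) ^ 2 / (2 * v)) (-((x - m) / v)) x := by
    refine ((((hasDerivAt_id x).sub_const m).pow 2).neg.div_const (2 * (v : ℝ))).congr_deriv ?_
    simp only [id_eq, Nat.cast_ofNat, Nat.add_one_sub_one, pow_one, mul_one, neg_div]
    rw [mul_div_mul_left _ _ two_ne_zero]
  refine (hexponent.exp.const_mul (√(2 * Real.pi * v))⁻¹).congr_deriv ?_
  rw [gaussianPDFReal]
  ring

lemma integrable_mul_gaussianPDFReal (m : ℝ) (v : ℝ≥0) :
    Integrable fun x => x * gaussianPDFReal m v x := by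
  rcases eq_or_ne v 0 with rfl | hv
  · simp
  · have hid : Integrable id (gaussianReal m v) :=
      memLp_one_iff_integrable.mp (memLp_id_gaussianReal 1)
    rw [gaussianReal_of_var_ne_zero m hv, integrable_withDensity_iff (measurable_gaussianPDF m v)
      (ae_of_all _ fun _ => gaussianPDF_lt_top)] at hid
    simpa only [id_eq, toReal_gaussianPDF] using hid

lemma integrable_const_sub_mul_gaussianPDFReal (c m : ℝ) (v : ℝ≥0) :
    Integrable fun x => (c - x) * gaussianPDFReal m v x := by
  simp only [sub_mul]
  exact ((integrable_gaussianPDFReal m v).const_mul c).sub (integrable_mul_gaussianPDFReal m v)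

lemma integral_Iic_mean_sub_mul_gaussianPDFReal (m : ℝ) (v : ℝ≥0) (z : ℝ) :
    ∫ x in Iic z, (m - x) * gaussianPDFReal m v x = v * gaussianPDFReal m v z := by
  have hderiv (x : ℝ) : HasDerivAt (fun t => v * gaussianPDFReal m v t)
      ((m - x) * gaussianPDFReal m v x) x := by
    refine ((hasDerivAt_gaussianPDFReal m v x).const_mul (v : ℝ)).congr_deriv ?_
    rcases eq_or_ne v 0 with rfl | hv
    · simp
    · field_simp
      ring
  exact integral_Iic_of_hasDerivAt_of_integrableOn (fun x _ => hderiv x)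
    (integrable_const_sub_mul_gaussianPDFReal m m v).integrableOn
    ((integrable_gaussianPDFReal m v).const_mul (v : ℝ)).integrableOn

lemma integral_Iic_sub_mul_gaussianPDFReal (m : ℝ) (v : ℝ≥0) (z : ℝ) :
    ∫ x in Iic z, (z - x) * gaussianPDFReal m v x =
      (z - m) * (∫ x in Iic z, gaussianPDFReal m v x) + v * gaussianPDFReal m v z := by
  rw [← integral_Iic_mean_sub_mul_gaussianPDFReal, ← integral_const_mul,
    ← integral_add ((integrable_gaussianPDFReal m v).const_mul (z - m)).integrableOn
      (integrable_const_sub_mul_gaussianPDFReal m m v).integrableOn]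
  congr 1 with x
  ring

lemma integral_Iic_sub_mul_gaussianPDFReal_pos (m : ℝ) {v : ℝ≥0} (hv : v ≠ 0) (z : ℝ) :
    0 < ∫ x in Iic z, (z - x) * gaussianPDFReal m v x := by
  rw [integral_Iic_eq_integral_Iio]
  exact setIntegral_pos_of_forall_pos measurableSet_Iio (by simp)
    (integrable_const_sub_mul_gaussianPDFReal z m v).integrableOn
    fun x hx => mul_pos (sub_pos.mpr hx) (gaussianPDFReal_pos m v x hv)

lemma stdNormalPDF_eq_gaussianPDFReal : stdNormalPDF = gaussianPDFReal 0 1 := by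
  ext z
  simp [stdNormalPDF, gaussianPDFReal]

lemma mul_stdNormalCDF_add_stdNormalPDF (z : ℝ) :
    z * stdNormalCDF z + stdNormalPDF z = ∫ t in Iic z, (z - t) * stdNormalPDF t := by
  simp only [stdNormalCDF, stdNormalPDF_eq_gaussianPDFReal, integral_Iic_sub_mul_gaussianPDFReal,
    sub_zero, NNReal.coe_one, one_mul]

lemma mul_stdNormalCDF_add_stdNormalPDF_pos (z : ℝ) :
    0 < z * stdNormalCDF z + stdNormalPDF z := by
  rw [mul_stdNormalCDF_add_stdNormalPDF, stdNormalPDF_eq_gaussianPDFReal]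
  exact integral_Iic_sub_mul_gaussianPDFReal_pos 0 one_ne_zero z

end Gaussian

/-- For every real `z`, `z·Φ(z) + φ(z) > 0`; consequently, for `σ > 0` the
closed-form Expected Improvement `(μ − a)·Φ((μ − a)/σ) + σ·φ((μ − a)/σ)` is
strictly positive for all `μ, a`. -/
theorem expectedImprovement_pos :
    (∀ z : ℝ, 0 < z * stdNormalCDF z + stdNormalPDF z) ∧
    (∀ μ a σ : ℝ, 0 < σ →
      0 < (μ - a) * stdNormalCDF ((μ - a) / σ) + σ * stdNormalPDF ((μ - a) / σ)) := by
  refine ⟨mul_stdNormalCDF_add_stdNormalPDF_pos, fun μ a σ hσ => ?_⟩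
  set z := (μ - a) / σ
  have hμa : μ - a = σ * z := (mul_div_cancel₀ _ hσ.ne').symm
  calc 0 < σ * (z * stdNormalCDF z + stdNormalPDF z) :=
        mul_pos hσ (mul_stdNormalCDF_add_stdNormalPDF_pos z)
    _ = (μ - a) * stdNormalCDF z + σ * stdNormalPDF z := by rw [hμa]; ring
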